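/- Suppose Assumption 1 holds for a Borel probability measure P on ℝ^m with support the nonempty closed cone Ξ, negative log-density Q ∈ MRV(Ξ, q, λ), q ∈ RV(α), α > 0, and λ(θ) > 0 for all unit θ ∈ Ξ. Then for every open set O ⊆ ℝ^m, liminf_{u→∞} log P({z ∈ ℝ^m : z/u ∈ O}) / q(u) ≥ − inf{λ(w) : w ∈ O ∩ Ξ}, with the conventions log 0 = −∞ and inf ∅ = +∞. -/

import Mathlib

open Filter Topology MeasureTheory Set

noncomputable section

/-- Euclidean space `ℝ^d`. -/
abbrev Rn (d : ℕ) : Type := EuclideanSpace ℝ (Fin d)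

/-- A set is a cone: closed under multiplication by positive scalars. -/
def IsPosCone {d : ℕ} (Z : Set (Rn d)) : Prop :=
  ∀ c : ℝ, 0 < c → ∀ z ∈ Z, c • z ∈ Z

/-- `f : (0,∞) → (0,∞)` is regularly varying with index `κ`:
`f(uz)/f(u) → z^κ` as `u → ∞`, for every `z > 0`. -/
def RegVary (f : ℝ → ℝ) (κ : ℝ) : Prop :=
  (∀ u : ℝ, 0 < u → 0 < f u) ∧
  ∀ z : ℝ, 0 < z → Tendsto (fun u : ℝ => f (u * z) / f u) atTop (𝓝 (z ^ κ))

/-- `f ∈ MRV(Z, h, f*)` (multivariate regular variation on the cone `Z`), except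
for the requirement `h ∈ RV(κ)` which is stated separately: `f, f* : Z → [0,∞)`,
`f*` continuous on `Z`, and `f(u • z_u)/h(u) → f*(z)` whenever `z_u → z` in `Z`. -/
def MultiRegVary {d : ℕ} (Z : Set (Rn d)) (f : Rn d → ℝ) (h : ℝ → ℝ)
    (fstar : Rn d → ℝ) : Prop :=
  (∀ z ∈ Z, 0 ≤ f z) ∧ (∀ z ∈ Z, 0 ≤ fstar z) ∧ ContinuousOn fstar Z ∧
  ∀ z ∈ Z, ∀ zu : ℝ → Rn d, (∀ u : ℝ, 0 < u → zu u ∈ Z) →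
    Tendsto zu atTop (𝓝 z) →
    Tendsto (fun u : ℝ => f (u • zu u) / h u) atTop (𝓝 (fstar z))

/-- Assumption 1: `P` is a Borel probability measure on `ℝ^m` whose support is the
nonempty closed cone `Ξ`, with density `exp (-Q z)` on `Ξ` (and `0` outside) w.r.t.
Lebesgue measure, `Q ∈ MRV(Ξ, q, lam)` with `q ∈ RV(α)`, `α > 0`, and `lam > 0`
on unit vectors of `Ξ`. -/
def Assumption1 {d : ℕ} (P : Measure (Rn d)) (Ξ : Set (Rn d))
    (Q : Rn d → ℝ) (q : ℝ → ℝ) (lam : Rn d → ℝ) (α : ℝ) : Prop :=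
  IsProbabilityMeasure P ∧
  Ξ.Nonempty ∧ IsClosed Ξ ∧ IsPosCone Ξ ∧
  -- Ξ is the support of P: the smallest closed set of full measure
  P Ξ = 1 ∧ (∀ C : Set (Rn d), IsClosed C → P C = 1 → Ξ ⊆ C) ∧
  -- density of P w.r.t. Lebesgue measure
  P = volume.withDensity
    (fun z => ENNReal.ofReal (Ξ.indicator (fun z' => Real.exp (-(Q z'))) z)) ∧
  0 < α ∧ RegVary q α ∧ MultiRegVary Ξ Q q lam ∧
  (∀ z ∈ Ξ, ‖z‖ = 1 → 0 < lam z)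

/-- Sequential multivariate regular variation upgraded to a joint (locally uniform) limit. -/
lemma mrv_joint {d : ℕ} {Ξ : Set (Rn d)} {Q : Rn d → ℝ} {q : ℝ → ℝ} {lam : Rn d → ℝ}
    (h : MultiRegVary Ξ Q q lam) {w : Rn d} (hw : w ∈ Ξ) :
    Tendsto (fun p : ℝ × Rn d => Q (p.1 • p.2) / q p.1) (atTop ×ˢ 𝓝[Ξ] w) (𝓝 (lam w)) := by
  classical
  obtain ⟨-, -, -, h⟩ := h
  by_contra hcon
  rw [tendsto_def] at hcon
  push Not at hcon
  obtain ⟨V, hV, hbad⟩ := hcon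
  have hmem : ∀ᶠ p : ℝ × Rn d in atTop ×ˢ 𝓝[Ξ] w, p.2 ∈ Ξ :=
    tendsto_snd.eventually (eventually_mem_nhdsWithin)
  have hfreq : ∃ᶠ p : ℝ × Rn d in atTop ×ˢ 𝓝[Ξ] w,
      Q (p.1 • p.2) / q p.1 ∉ V ∧ p.2 ∈ Ξ := by
    refine Frequently.and_eventually ?_ hmem
    intro hh
    apply hbad
    filter_upwards [hh] with p hp
    simpa using hp
  obtain ⟨s, hs, hsb⟩ := exists_seq_forall_of_frequently hfreq
  have hs1 : Tendsto (fun n => (s n).1) atTop atTop := tendsto_fst.comp hs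
  have hs2 : Tendsto (fun n => (s n).2) atTop (𝓝 w) :=
    (tendsto_snd.comp hs).mono_right nhdsWithin_le_nhds
  let zu : ℝ → Rn d := fun u => if hu : ∃ n, (s n).1 = u then (s hu.choose).2 else w
  have hzu : ∀ u, (∃ n, (s n).1 = u ∧ zu u = (s n).2) ∨ ((¬ ∃ n, (s n).1 = u) ∧ zu u = w) := by
    intro u
    by_cases hu : ∃ n, (s n).1 = u
    · left
      exact ⟨hu.choose, hu.choose_spec, by simp only [zu, dif_pos hu]⟩
    · right
      exact ⟨hu, by simp only [zu, dif_neg hu]⟩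
  have hzuΞ : ∀ u : ℝ, 0 < u → zu u ∈ Ξ := by
    intro u _
    rcases hzu u with ⟨n, _, h2⟩ | ⟨_, h2⟩
    · rw [h2]; exact (hsb n).2
    · rw [h2]; exact hw
  have hzt : Tendsto zu atTop (𝓝 w) := by
    rw [tendsto_def]
    intro W hW
    obtain ⟨N, hN⟩ := eventually_atTop.1 (hs2.eventually_mem hW)
    have hfin : ∀ᶠ u : ℝ in atTop, ∀ i ∈ Finset.range N, (s i).1 < u := by
      rw [Filter.eventually_all_finset]
      intro i _
      exact eventually_gt_atTop _
    filter_upwards [hfin] with u hu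
    rcases hzu u with ⟨n, h1, h2⟩ | ⟨_, h2⟩
    · show zu u ∈ W
      rw [h2]
      apply hN
      by_contra hlt
      have := hu n (by simpa using hlt)
      linarith
    · show zu u ∈ W
      rw [h2]; exact mem_of_mem_nhds hW
  have hlim := (h w hw zu hzuΞ hzt).comp hs1
  obtain ⟨n, hn⟩ := (hlim.eventually_mem hV).exists
  rcases hzu (s n).1 with ⟨k, h1, h2⟩ | ⟨h1, _⟩
  · apply (hsb k).1
    simp only [Function.comp, h2] at hn
    rw [h1]; exact hn
  · exact h1 ⟨n, rfl⟩

/-- Under the regular variation hypotheses `q → ∞`. -/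
lemma q_tendsto {d : ℕ} {Ξ : Set (Rn d)} {Q : Rn d → ℝ} {q : ℝ → ℝ} {lam : Rn d → ℝ} {α : ℝ}
    (hα : 0 < α) (hq : RegVary q α) (h : MultiRegVary Ξ Q q lam) (hc : IsPosCone Ξ)
    {θ : Rn d} (hθ : θ ∈ Ξ) (hl : 0 < lam θ) : Tendsto q atTop atTop := by
  obtain ⟨qpos, hq⟩ := hq
  have hj := mrv_joint h hθ
  have hup := hj.eventually (eventually_lt_nhds (show lam θ < 2 * lam θ by linarith))
  have hlo := hj.eventually (eventually_gt_nhds (show lam θ / 2 < lam θ by linarith))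
  obtain ⟨pu, hpu, pz, hpz, hp⟩ := eventually_prod_iff.1 (hup.and hlo)
  have hcθ : Tendsto (fun c : ℝ => c • θ) (𝓝[>] 1) (𝓝[Ξ] θ) := by
    apply tendsto_nhdsWithin_of_tendsto_nhds_of_eventually_within
    · have : Tendsto (fun c : ℝ => c • θ) (𝓝 1) (𝓝 ((1:ℝ) • θ)) :=
        (continuous_id.smul continuous_const).tendsto 1
      rw [one_smul] at this
      exact this.mono_left nhdsWithin_le_nhds
    · filter_upwards [self_mem_nhdsWithin] with c hc1
      exact hc c (lt_trans one_pos hc1) _ hθ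
  obtain ⟨b, hb1, hb⟩ := (mem_nhdsGT_iff_exists_Ioc_subset).1 (hcθ.eventually hpz)
  have hb1 : 1 < b := hb1
  have hθz : pz θ := hpz.self_of_nhdsWithin hθ
  have hball : ∀ c ∈ Icc 1 b, pz (c • θ) := by
    intro c hc'
    rcases eq_or_lt_of_le hc'.1 with h1 | h1
    · rw [← h1, one_smul]; exact hθz
    · exact hb ⟨h1, hc'.2⟩
  have hbα : 1 < b ^ α := Real.one_lt_rpow hb1 hα
  set ρ : ℝ := (1 + b ^ α) / 2 with hρ
  have hρ1 : 1 < ρ := by rw [hρ]; linarith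
  have hst := (hq b (by linarith)).eventually (eventually_gt_nhds (show ρ < b ^ α by rw [hρ]; linarith))
  obtain ⟨U, hU⟩ := eventually_atTop.1 ((hpu.and hst).and (eventually_gt_atTop 0))
  have hU0 : 0 < U := (hU U le_rfl).2
  have hstep : ∀ u, U ≤ u → ρ * q u ≤ q (u * b) := by
    intro u hu
    have h1 := (hU u hu).1.2
    have h2 := qpos u (by linarith)
    rw [lt_div_iff₀ h2] at h1
    exact h1.le
  have hquart : ∀ u, U ≤ u → ∀ c ∈ Icc 1 b, q u / 4 ≤ q (u * c) := by
    intro u hu c hc'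
    have huc : u ≤ u * c := le_mul_of_one_le_right (by linarith) hc'.1
    have h1 := (hp (hU u hu).1.1 (hball c hc')).2
    have h2 := (hp (hU (u * c) (hu.trans huc)).1.1 hθz).1
    simp only [smul_smul] at h1 h2
    have p1 := qpos u (by linarith)
    have p2 := qpos (u * c) (by linarith)
    rw [lt_div_iff₀ p1] at h1
    rw [div_lt_iff₀ p2] at h2
    have h3 : lam θ * (q u / 4) < lam θ * q (u * c) := by linarith
    exact (lt_of_mul_lt_mul_left h3 hl.le).le
  have hpow : ∀ n : ℕ, U ≤ U * b ^ n ∧ ρ ^ n * q U ≤ q (U * b ^ n) := by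
    intro n
    refine ⟨le_mul_of_one_le_right hU0.le (one_le_pow₀ hb1.le), ?_⟩
    induction n with
    | zero => simp
    | succ n ih =>
      have := hstep (U * b ^ n) (le_mul_of_one_le_right hU0.le (one_le_pow₀ hb1.le))
      calc ρ ^ (n+1) * q U = ρ * (ρ ^ n * q U) := by ring
        _ ≤ ρ * q (U * b ^ n) := by gcongr
        _ ≤ _ := this
        _ = _ := by rw [mul_assoc, ← pow_succ]
  rw [tendsto_atTop]
  intro M
  have hqU := qpos U hU0
  obtain ⟨N, hN⟩ := pow_unbounded_of_one_lt (4 * M / q U) hρ1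
  rw [div_lt_iff₀ hqU] at hN
  filter_upwards [eventually_ge_atTop (U * b ^ N)] with u hu
  have hbN : b ^ N ≤ u / U := by rw [le_div_iff₀ hU0]; linarith
  obtain ⟨n, hn1, hn2⟩ := exists_nat_pow_near ((one_le_pow₀ hb1.le).trans hbN) hb1
  have hNn : N ≤ n := by
    have := (pow_lt_pow_iff_right₀ hb1).1 (hbN.trans_lt hn2)
    omega
  have hbn : 0 < b ^ n := by positivity
  have hc' : u / U / b ^ n ∈ Icc 1 b := by
    constructor
    · rw [le_div_iff₀ hbn]; linarith
    · rw [div_le_iff₀ hbn, ← pow_succ']; exact hn2.le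
  have h1 := hquart (U * b ^ n) (hpow n).1 _ hc'
  have h2 : U * b ^ n * (u / U / b ^ n) = u := by field_simp
  rw [h2] at h1
  have h3 := (hpow n).2
  have h4 : ρ ^ N * q U ≤ ρ ^ n * q U := by gcongr; exact hρ1.le
  linarith

open scoped Pointwise in
/-- Pointwise lower bound with a real number below `-lam w`. -/
lemma ldp_eventually {d : ℕ} (P : Measure (Rn d)) (Ξ : Set (Rn d))
    (Q : Rn d → ℝ) (q : ℝ → ℝ) (lam : Rn d → ℝ) (α : ℝ)
    (hA1 : Assumption1 P Ξ Q q lam α)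
    (O : Set (Rn d)) (hO : IsOpen O) (w : Rn d) (hwO : w ∈ O) (hw : w ∈ Ξ)
    (r : ℝ) (hr : r < - lam w) :
    ∀ᶠ u : ℝ in atTop,
      ENNReal.ofReal (Real.exp (r * q u)) ≤ P {z : Rn d | u⁻¹ • z ∈ O} := by
  obtain ⟨hP, -, hcl, hcone, hP1, hsupp, hdens, hα, hq, hm, hpos⟩ := hA1
  by_cases hne : ∃ z ∈ Ξ, z ≠ 0
  swap
  · push Not at hne
    have hw0 := hne w hw
    filter_upwards [eventually_gt_atTop 0] with u hu
    have h1 : P Ξ ≤ P {z : Rn d | u⁻¹ • z ∈ O} := by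
      apply measure_mono
      intro z hz
      rw [hne z hz]
      simpa [hw0] using hwO
    rw [hP1] at h1
    refine le_trans ?_ h1
    rw [ENNReal.ofReal_le_one, Real.exp_le_one_iff]
    have := hm.2.1 w hw
    have := hq.1 u hu
    nlinarith
  obtain ⟨z, hz, hz0⟩ := hne
  have hzn : 0 < ‖z‖ := norm_pos_iff.2 hz0
  have hθ : ‖z‖⁻¹ • z ∈ Ξ := hcone _ (inv_pos.2 hzn) z hz
  have hqt := q_tendsto hα hq hm hcone hθ (hpos _ hθ (by
    rw [norm_smul, norm_inv, norm_norm]; exact inv_mul_cancel₀ hzn.ne'))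
  set ε : ℝ := (- lam w - r) / 2 with hε
  have hε0 : 0 < ε := by rw [hε]; linarith
  have hj := (mrv_joint hm hw).eventually
    (eventually_lt_nhds (show lam w < lam w + ε by linarith))
  obtain ⟨pu, hpu, pz, hpz, hp⟩ := eventually_prod_iff.1 hj
  obtain ⟨V, hVo, hwV, hV⟩ := mem_nhdsWithin.1 hpz
  set B : Set (Rn d) := V ∩ O with hB
  have hBo : IsOpen B := hVo.inter hO
  have hBm : MeasurableSet (B ∩ Ξ) := hBo.measurableSet.inter hcl.measurableSet
  -- positive volume
  have hvol : volume (B ∩ Ξ) ≠ 0 := by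
    intro h0
    have hac : P ≪ volume := by rw [hdens]; exact withDensity_absolutelyContinuous _ _
    have hPB0 : P (B ∩ Ξ) = 0 := hac h0
    have hΞc : P Ξᶜ = 0 := (prob_compl_eq_zero_iff hcl.measurableSet).2 hP1
    have hPB : P B = 0 := by
      refine measure_mono_null (t := (B ∩ Ξ) ∪ Ξᶜ) ?_ (measure_union_null hPB0 hΞc)
      intro x hx
      by_cases hxΞ : x ∈ Ξ
      · exact Or.inl ⟨hx, hxΞ⟩
      · exact Or.inr hxΞ
    have := hsupp Bᶜ hBo.isClosed_compl ((prob_compl_eq_one_iff hBo.measurableSet).2 hPB)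
    exact this hw ⟨hwV, hwO⟩
  have hexp : Tendsto (fun u => ENNReal.ofReal (Real.exp (-ε * q u))) atTop (𝓝 0) := by
    rw [← ENNReal.ofReal_zero]
    refine ENNReal.tendsto_ofReal (Real.tendsto_exp_atBot.comp ?_)
    exact hqt.const_mul_atTop_of_neg (by linarith)
  have hev := hexp.eventually (eventually_lt_nhds (pos_iff_ne_zero.2 hvol))
  filter_upwards [hpu, hev, eventually_ge_atTop 1] with u hu1 hu2 hu3
  have hu0 : 0 < u := by linarith
  have hqu := hq.1 u hu0
  have hsm : MeasurableSet (u • (B ∩ Ξ)) := hBm.const_smul₀ u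
  have hvu : volume (B ∩ Ξ) ≤ volume (u • (B ∩ Ξ)) := by
    rw [Measure.addHaar_smul]
    refine le_mul_of_one_le_left zero_le ?_
    rw [ENNReal.one_le_ofReal]
    exact (one_le_pow₀ hu3).trans (le_abs_self _)
  calc ENNReal.ofReal (Real.exp (r * q u))
      = ENNReal.ofReal (Real.exp (-(lam w + ε) * q u)) * ENNReal.ofReal (Real.exp (-ε * q u)) := by
        rw [← ENNReal.ofReal_mul (Real.exp_pos _).le, ← Real.exp_add]
        congr 2
        rw [hε]; ring
    _ ≤ ENNReal.ofReal (Real.exp (-(lam w + ε) * q u)) * volume (u • (B ∩ Ξ)) := by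
        gcongr
        exact hu2.le.trans hvu
    _ = ∫⁻ _ in u • (B ∩ Ξ), ENNReal.ofReal (Real.exp (-(lam w + ε) * q u)) := by
        rw [setLIntegral_const]
    _ ≤ ∫⁻ z in u • (B ∩ Ξ),
          ENNReal.ofReal (Ξ.indicator (fun z' => Real.exp (-(Q z'))) z) := by
        refine setLIntegral_mono' hsm ?_
        rintro _ ⟨x, hx, rfl⟩
        have hxΞ : u • x ∈ Ξ := hcone u hu0 x hx.2
        simp only [Set.indicator_of_mem hxΞ]
        have h1 := hp hu1 (hV ⟨hx.1.1, hx.2⟩)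
        simp only at h1
        rw [div_lt_iff₀ hqu] at h1
        apply ENNReal.ofReal_le_ofReal
        apply Real.exp_le_exp.2
        linarith
    _ = P (u • (B ∩ Ξ)) := by
        conv_rhs => rw [hdens]
        rw [withDensity_apply _ hsm]
    _ ≤ _ := by
        apply measure_mono
        rintro _ ⟨x, hx, rfl⟩
        show u⁻¹ • u • x ∈ O
        rw [inv_smul_smul₀ hu0.ne']
        exact hx.1.2

/-- Primitive large deviation lower bound: for every open set `O`,
`liminf_{u→∞} log P(z/u ∈ O) / q(u) ≥ −inf{lam(w) : w ∈ O ∩ Ξ}`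
(in `EReal`, with `log 0 = ⊥` and `inf ∅ = ⊤`). -/
theorem primitive_ldp_lower {d : ℕ} (P : Measure (Rn d)) (Ξ : Set (Rn d))
    (Q : Rn d → ℝ) (q : ℝ → ℝ) (lam : Rn d → ℝ) (α : ℝ)
    (hA1 : Assumption1 P Ξ Q q lam α)
    (O : Set (Rn d)) (hO : IsOpen O) :
    (- ⨅ w ∈ O ∩ Ξ, (lam w : EReal)) ≤
      Filter.liminf
        (fun u : ℝ => ENNReal.log (P {z : Rn d | u⁻¹ • z ∈ O}) / ((q u : ℝ) : EReal))
        atTop := by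
  rw [EReal.neg_le]
  refine le_iInf₂ fun w hw => ?_
  rw [EReal.neg_le]
  refine le_of_forall_lt_imp_le_of_dense fun c hc => ?_
  obtain ⟨r, hcr, hr⟩ := EReal.lt_iff_exists_real_btwn.1 hc
  have hr' : r < - lam w := by exact_mod_cast hr
  refine hcr.le.trans ?_
  refine le_liminf_of_le (by isBoundedDefault) ?_
  filter_upwards [ldp_eventually P Ξ Q q lam α hA1 O hO w hw.1 hw.2 r hr',
    eventually_gt_atTop 0] with u hu hu0
  have hqu : 0 < q u := hA1.2.2.2.2.2.2.2.2.1.1 u hu0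
  rw [EReal.le_div_iff_mul_le (by exact_mod_cast hqu) (EReal.coe_ne_top _)]
  have h := ENNReal.log_monotone hu
  rw [ENNReal.log_ofReal_of_pos (Real.exp_pos _), Real.log_exp] at h
  exact_mod_cast h
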